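/- Let v = (v₁,…,vₙ) be an n-tuple of polynomials in n real variables (a polynomial vector field on ℝⁿ) and let f be a polynomial in n variables. Then ∫_{ℝⁿ} Σᵢ vᵢ(x)·(∂ᵢf(x) − xᵢ·f(x))·e^{−‖x‖²/2} dx = −∫_{ℝⁿ} (Σᵢ ∂ᵢvᵢ(x))·f(x)·e^{−‖x‖²/2} dx. Equivalently, writing g(x) = f(x)e^{−‖x‖²/2} and letting η act as the first-order differential operator Σᵢ vᵢ∂ᵢ with divergence ∇η := Σᵢ ∂ᵢvᵢ, one has ∫_{ℝⁿ} η(g) dx = −∫_{ℝⁿ} (∇η)(x)·g(x) dx. -/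

import Mathlib

open MvPolynomial MeasureTheory

/-- A polynomial times the Gaussian weight is integrable. -/
theorem MvPolynomial.integrable_eval_mul_gaussian {ι : Type*} [Fintype ι]
    (p : MvPolynomial ι ℝ) :
    Integrable fun x : ι → ℝ => eval x p * Real.exp (-(∑ i, x i ^ 2) / 2) := by
  induction p using MvPolynomial.induction_on' with
  | monomial u a =>
    have h (k : ℕ) : Integrable fun t : ℝ => t ^ k * Real.exp (-(1 / 2) * t ^ 2) := by
      have hk : (-1 : ℝ) < (k : ℝ) := by linarith [k.cast_nonneg (α := ℝ)]
      simpa using integrable_rpow_mul_exp_neg_mul_sq (b := 1 / 2) (by norm_num) hk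
    refine ((Integrable.fintype_prod fun i => h (u i)).const_mul a).congr (ae_of_all _ fun x => ?_)
    simp only [eval_monomial, Finset.prod_mul_distrib, ← Real.exp_sum, ← Finset.mul_sum]
    rw [Finsupp.prod_fintype _ _ fun i => pow_zero _, mul_assoc]
    ring_nf
  | add p q hp hq => simpa only [map_add, add_mul] using hp.fun_add hq

theorem MvPolynomial.hasLineDerivAt_eval {ι : Type*} [DecidableEq ι]
    (p : MvPolynomial ι ℝ) (x : ι → ℝ) (i : ι) :
    HasLineDerivAt ℝ (fun y => eval y p) (eval x (pderiv i p)) x (Pi.single i 1) := by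
  unfold HasLineDerivAt
  induction p using MvPolynomial.induction_on with
  | C a => simpa using hasDerivAt_const (0 : ℝ) a
  | add p q hp hq => simpa only [map_add] using hp.fun_add hq
  | mul_X p j hp =>
    have hj : HasDerivAt (fun t : ℝ => x j + t * (Pi.single i 1 : ι → ℝ) j)
        ((Pi.single i 1 : ι → ℝ) j) 0 := by
      simpa using ((hasDerivAt_id (0 : ℝ)).mul_const _).const_add (x j)
    simp only [map_mul, eval_X]
    refine (hp.fun_mul hj).congr_deriv ?_
    rcases eq_or_ne j i with rfl | hji
    · simp [add_comm, mul_comm]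
    · simp [pderiv_X_of_ne hji, hji, mul_comm]

theorem hasLineDerivAt_gaussian {ι : Type*} [Fintype ι] [DecidableEq ι] (x : ι → ℝ) (i : ι) :
    HasLineDerivAt ℝ (fun y : ι → ℝ => Real.exp (-(∑ j, y j ^ 2) / 2))
      (-x i * Real.exp (-(∑ j, x j ^ 2) / 2)) x (Pi.single i 1) := by
  have h := hasLineDerivAt_eval (∑ j, X j ^ 2 : MvPolynomial ι ℝ) x i
  unfold HasLineDerivAt at h ⊢
  simp only [map_sum, map_pow, eval_X] at h
  refine (h.fun_neg.div_const 2).exp.congr_deriv ?_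
  simp [pderiv_X, Pi.single_apply, Derivation.leibniz_pow, apply_ite]
  ring

theorem MvPolynomial.integrable_mul_pderiv_sub_gaussian {ι : Type*} [Fintype ι]
    (p q : MvPolynomial ι ℝ) (i : ι) :
    Integrable fun x : ι → ℝ => eval x p * (eval x (pderiv i q) - x i * eval x q) *
      Real.exp (-(∑ j, x j ^ 2) / 2) := by
  refine (integrable_eval_mul_gaussian (p * (pderiv i q - X i * q))).congr
    (ae_of_all _ fun x => ?_)
  simp only [eval_mul, eval_sub, eval_X]

/-- Gaussian integration by parts in one coordinate direction. -/
theorem MvPolynomial.integral_mul_pderiv_sub_gaussian {ι : Type*} [Fintype ι]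
    (p q : MvPolynomial ι ℝ) (i : ι) :
    ∫ x : ι → ℝ, eval x p * (eval x (pderiv i q) - x i * eval x q) *
        Real.exp (-(∑ j, x j ^ 2) / 2)
      = -∫ x : ι → ℝ, eval x (pderiv i p) * eval x q * Real.exp (-(∑ j, x j ^ 2) / 2) := by
  classical
  have h := integral_bilinear_hasLineDerivAt_right_eq_neg_left_of_integrable
    (μ := (volume : Measure (ι → ℝ))) (B := ContinuousLinearMap.mul ℝ ℝ) (v := Pi.single i 1)
    (f := fun x => eval x p) (f' := fun x => eval x (pderiv i p))
    (g := fun x => eval x q * Real.exp (-(∑ j, x j ^ 2) / 2))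
    (g' := fun x => (eval x (pderiv i q) - x i * eval x q) * Real.exp (-(∑ j, x j ^ 2) / 2))
    (by simpa only [ContinuousLinearMap.mul_apply', map_mul, mul_assoc] using integrable_eval_mul_gaussian (pderiv i p * q))
    (by simpa only [ContinuousLinearMap.mul_apply', mul_assoc] using
      integrable_mul_pderiv_sub_gaussian p q i)
    (by simpa only [ContinuousLinearMap.mul_apply', map_mul, mul_assoc] using integrable_eval_mul_gaussian (p * q))
    (fun x _ => hasLineDerivAt_eval p x i)
    (fun x _ => by
      have hq := hasLineDerivAt_eval q x i
      have hE := hasLineDerivAt_gaussian x i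
      unfold HasLineDerivAt at hq hE ⊢
      refine (hq.fun_mul hE).congr_deriv ?_
      simp only [zero_smul, add_zero]
      ring)
  simpa [mul_assoc] using h

theorem berezin_infinitesimal_even (n : ℕ)
    (v : Fin n → MvPolynomial (Fin n) ℝ) (f : MvPolynomial (Fin n) ℝ) :
    ∫ x : Fin n → ℝ,
        (∑ i, eval x (v i) * (eval x (pderiv i f) - x i * eval x f)) *
          Real.exp (-(∑ i, x i ^ 2) / 2)
      = - ∫ x : Fin n → ℝ,
          (∑ i, eval x (pderiv i (v i))) * eval x f * Real.exp (-(∑ i, x i ^ 2) / 2) := by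
  simp only [Finset.sum_mul]
  rw [integral_finsetSum, integral_finsetSum, ← Finset.sum_neg_distrib]
  · exact Finset.sum_congr rfl fun i _ => integral_mul_pderiv_sub_gaussian (v i) f i
  · intro i _
    simpa only [map_mul] using integrable_eval_mul_gaussian (pderiv i (v i) * f)
  · intro i _
    exact integrable_mul_pderiv_sub_gaussian (v i) f i
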